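/- In the real Clifford algebra Clℝ(w) with n = 3 and w identically +1, for all vectors d, E, H : Fin 3 → ℝ, the product ι(d) · (ι(E) + ω · ι(H)) equals algebraMap (Σᵢ d i · E i) − ι(d ×₃ H) + ω · ι(d ×₃ E) + (Σᵢ d i · H i) • ω. (Equation (12) of the paper: with d the spatial gradient and E + ωH the complex electromagnetic field, the scalar part is div E, the vector part is −curl H (combining with ∂₀E to give one pair of Maxwell equations), the ω·ι part is curl E and the ω-scalar part is div H, giving the other pair.) -/

import Mathlib

open scoped Matrix

/-- The real Clifford algebra `R₃` (three generators squaring to `+1`). -/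
noncomputable abbrev CliffR3 :=
  CliffordAlgebra (QuadraticMap.weightedSumSquares ℝ (fun _ : Fin 3 => (1 : ℝ)))

/-- The canonical embedding of vectors into `R₃`. -/
noncomputable def ιR3 : (Fin 3 → ℝ) →ₗ[ℝ] CliffR3 :=
  CliffordAlgebra.ι (QuadraticMap.weightedSumSquares ℝ (fun _ : Fin 3 => (1 : ℝ)))

/-- The volume element `ω = e₁e₂e₃` of `R₃`. -/
noncomputable def ωR3 : CliffR3 :=
  ((List.finRange 3).map fun i => ιR3 (Pi.single i 1)).prod

/-- The multivector identity in any algebra with three anticommuting square roots of `1`. -/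
lemma gradient_mul_field_aux {A : Type*} [Ring A] [Algebra ℝ A] (a b c : A)
    (haa : a * a = 1) (hbb : b * b = 1) (hcc : c * c = 1)
    (hba : b * a = -(a * b)) (hca : c * a = -(a * c)) (hcb : c * b = -(b * c))
    (d0 d1 d2 E0 E1 E2 H0 H1 H2 : ℝ) :
    (d0 • a + d1 • b + d2 • c) * ((E0 • a + E1 • b + E2 • c) +
        (a * (b * c)) * (H0 • a + H1 • b + H2 • c)) =
      (d0 * E0 + d1 * E1 + d2 * E2) • (1 : A) -
        ((d1 * H2 - d2 * H1) • a + (d2 * H0 - d0 * H2) • b + (d0 * H1 - d1 * H0) • c) +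
        (a * (b * c)) *
          ((d1 * E2 - d2 * E1) • a + (d2 * E0 - d0 * E2) • b + (d0 * E1 - d1 * E0) • c) +
        (d0 * H0 + d1 * H1 + d2 * H2) • (a * (b * c)) := by
  have haa' : ∀ x, a * (a * x) = x := fun x => by rw [← mul_assoc, haa, one_mul]
  have hbb' : ∀ x, b * (b * x) = x := fun x => by rw [← mul_assoc, hbb, one_mul]
  have hcc' : ∀ x, c * (c * x) = x := fun x => by rw [← mul_assoc, hcc, one_mul]
  have hba' : ∀ x, b * (a * x) = -(a * (b * x)) := fun x => by
    rw [← mul_assoc, hba, neg_mul, mul_assoc]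
  have hca' : ∀ x, c * (a * x) = -(a * (c * x)) := fun x => by
    rw [← mul_assoc, hca, neg_mul, mul_assoc]
  have hcb' : ∀ x, c * (b * x) = -(b * (c * x)) := fun x => by
    rw [← mul_assoc, hcb, neg_mul, mul_assoc]
  simp only [mul_add, add_mul, smul_mul_assoc, mul_smul_comm, mul_assoc, haa, hbb, hcc, hba, hca,
    hcb, haa', hbb', hcc', hba', hca', hcb', mul_neg, neg_neg, mul_one]
  module

lemma ιR3_eq (v : Fin 3 → ℝ) :
    ιR3 v = v 0 • ιR3 (Pi.single 0 1) + v 1 • ιR3 (Pi.single 1 1) + v 2 • ιR3 (Pi.single 2 1) := by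
  rw [← map_smul, ← map_smul, ← map_smul, ← map_add, ← map_add]
  congr 1
  ext i
  fin_cases i <;> simp

lemma ιR3_sq (i : Fin 3) : ιR3 (Pi.single i 1) * ιR3 (Pi.single i 1) = 1 := by
  rw [ιR3, CliffordAlgebra.ι_sq_scalar]
  fin_cases i <;> simp [QuadraticMap.weightedSumSquares_apply, Fin.sum_univ_three]

lemma ιR3_anti (i j : Fin 3) (h : i ≠ j) :
    ιR3 (Pi.single i 1) * ιR3 (Pi.single j 1) = -(ιR3 (Pi.single j 1) * ιR3 (Pi.single i 1)) := by
  rw [eq_neg_iff_add_eq_zero, ιR3, CliffordAlgebra.ι_mul_ι_add_swap]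
  fin_cases i <;> fin_cases j <;>
    simp_all [QuadraticMap.polar, QuadraticMap.weightedSumSquares_apply, Fin.sum_univ_three]

/-- Eq. (12): multiplying the gradient `d` by the complex electromagnetic field
`E + ωH` yields `div E − curl H + ω curl E + (div H) ω`, encoding the Maxwell
equations. -/
theorem gradient_mul_field (d E H : Fin 3 → ℝ) :
    ιR3 d * (ιR3 E + ωR3 * ιR3 H) =
      algebraMap ℝ CliffR3 (∑ i, d i * E i) - ιR3 (d ⨯₃ H) +
        ωR3 * ιR3 (d ⨯₃ E) + (∑ i, d i * H i) • ωR3 := by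
  have hω : ωR3 = ιR3 (Pi.single 0 1) * (ιR3 (Pi.single 1 1) * ιR3 (Pi.single 2 1)) := by
    simp [ωR3, List.finRange_succ]
  rw [hω, ιR3_eq d, ιR3_eq E, ιR3_eq H, ιR3_eq (d ⨯₃ H), ιR3_eq (d ⨯₃ E),
    Algebra.algebraMap_eq_smul_one, Fin.sum_univ_three, Fin.sum_univ_three]
  exact gradient_mul_field_aux _ _ _ (ιR3_sq 0) (ιR3_sq 1) (ιR3_sq 2)
    (ιR3_anti 1 0 (by decide)) (ιR3_anti 2 0 (by decide)) (ιR3_anti 2 1 (by decide))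
    _ _ _ _ _ _ _ _ _
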